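/- Let F(x) = ∑_{n≥1} f(n) e^{2πi λ_n x} with f(n) ≥ 0, ∑ f(n) < ∞, 0 ≤ λ₁ < λ₂ < .... Let M, N ≥ 1 be integers, 𝓜 ⊆ ℕ with |𝓜| = M such that 2|λ_m − λ_N| ≤ λ_N for all m ∈ 𝓜, β ∈ ℝ, and 2^M X > Y ≥ 1. Then max_{x ∈ [Y/2, 2^{M+1} X]} |Re(e^{iβ} F(x))| ≥ (1/16) ∑_{m ∈ 𝓜} f(m) − 4F(0)/(π² Y λ_N) + O(Y(M + log X)/X · ∑_{λ_n ≤ 2λ_N} f(n)). -/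

import Mathlib

set_option autoImplicit false

open Real

/-!
Convolving `Re (e^{iβ} F)` with a Fejér kernel of width `1 / L` modulated by `cos(β + 2πLv)`
removes the phase `β` and produces the cosine series with the nonnegative coefficients
`f(n) · triangle(λₙ / L - 1)`, which live on `λₙ ≤ 2L` and are at least `f(m) / 2` for the
resonating `m`. A bound for `|Re (e^{iβ} F)|` near `x` thus bounds this series at `x`, the tail of
the kernel beyond distance `Y / 2` costing `O(F(0) / (Y L))`.

On the other hand, the Fejér mean over `[0, T]`, `T = 2^M X`, of the cosine series times the Riesz
product `∏ (1 + cos 2πλₘx)` is a sum of nonnegative terms, because a Riesz product is a nonnegative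
combination of cosines and all cosines have nonnegative Fejér means; each resonating `m`
contributes at least half of its coefficient times the mean of the Riesz product. The interval
`[0, Y]`, where no bound is available, contributes at most `O(2^M Y / T)` times the sum of the
coefficients because the Riesz product is at most `2^M`.
-/

open Set MeasureTheory FourierTransform

/-- The Fejér mean `(2 / T) ∫₀ᵀ (1 - x / T) h(x) dx`, normalised so that constants are their own
mean when `T ≠ 0`. All its values on cosines are nonnegative. -/
noncomputable def fejerMean (T : ℝ) (h : ℝ → ℝ) : ℝ :=
  2 / T * ∫ x in 0..T, (1 - x / T) * h x

/-- The Fejér kernel of the real line, with value `1` at the origin. -/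
noncomputable def fejerKernel (u : ℝ) : ℝ := sinc (π * u) ^ 2

/-- The triangle function, supported on `[-1, 1]`; it is the Fourier transform of the Fejér
kernel. -/
noncomputable def triangle (x : ℝ) : ℝ := max 0 (1 - |x|)

section FejerMean

variable {T : ℝ} {g h : ℝ → ℝ}

lemma fejerMean_add (hg : Continuous g) (hh : Continuous h) :
    fejerMean T (fun x => g x + h x) = fejerMean T g + fejerMean T h := by
  simp only [fejerMean, mul_add]
  rw [intervalIntegral.integral_add, mul_add] <;>
    exact Continuous.intervalIntegrable (by fun_prop) _ _

lemma fejerMean_const_mul (a : ℝ) (h : ℝ → ℝ) :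
    fejerMean T (fun x => a * h x) = a * fejerMean T h := by
  simp only [fejerMean, mul_left_comm _ a, intervalIntegral.integral_const_mul]

lemma fejerMean_one (hT : T ≠ 0) : fejerMean T (fun _ => 1) = 1 := by
  have hint : ∫ x in 0..T, (1 - x / T) = T / 2 := by
    rw [intervalIntegral.integral_sub (by simp) (Continuous.intervalIntegrable (by fun_prop) _ _)]
    simp only [intervalIntegral.integral_const, intervalIntegral.integral_div, integral_id]
    simp only [smul_eq_mul]
    field_simp
    ring
  simp only [fejerMean, mul_one, hint]
  field_simp

lemma integral_one_sub_div_mul_cos {c : ℝ} (hT : T ≠ 0) (hc : c ≠ 0) :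
    ∫ x in 0..T, (1 - x / T) * cos (c * x) = (1 - cos (c * T)) / (c ^ 2 * T) := by
  have hderiv (x : ℝ) : HasDerivAt
      (fun x => (1 - x / T) * (sin (c * x) / c) - cos (c * x) / (c ^ 2 * T))
      ((1 - x / T) * cos (c * x)) x := by
    have hlin : HasDerivAt (fun x : ℝ => c * x) c x := by
      simpa using (hasDerivAt_id x).const_mul c
    have hweight : HasDerivAt (fun x : ℝ => 1 - x / T) (-(1 / T)) x := by
      simpa using ((hasDerivAt_id x).div_const T).const_sub 1
    refine ((hweight.mul (hlin.sin.div_const c)).sub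
      (hlin.cos.div_const (c ^ 2 * T))).congr_deriv ?_
    field_simp
    ring
  rw [intervalIntegral.integral_eq_sub_of_hasDerivAt (fun x _ => hderiv x)
    (Continuous.intervalIntegrable (by fun_prop) _ _)]
  simp only [mul_zero, sin_zero, cos_zero, zero_div, div_self hT]
  field_simp
  ring

lemma fejerMean_cos (hT : T ≠ 0) (ξ : ℝ) :
    fejerMean T (fun x => cos (2 * π * ξ * x)) = fejerKernel (ξ * T) := by
  rcases eq_or_ne ξ 0 with rfl | hξ
  · simpa [fejerKernel] using fejerMean_one hT
  have hπ := pi_ne_zero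
  have hcos : cos (2 * π * ξ * T) = 1 - 2 * sin (π * (ξ * T)) ^ 2 := by
    rw [← cos_two_mul_eq_one_sub]
    congr 1
    ring
  rw [fejerMean, integral_one_sub_div_mul_cos hT (by positivity), fejerKernel,
    sinc_of_ne_zero (by positivity), hcos]
  field_simp
  ring

lemma fejerMean_le_of_nonpos_on {Y D : ℝ} (hg : Continuous g) (hY : 0 ≤ Y) (hYT : Y ≤ T)
    (hT : 0 < T) (hD : 0 ≤ D) (hgD : ∀ x ∈ Icc 0 Y, g x ≤ D) (hg0 : ∀ x ∈ Icc Y T, g x ≤ 0) :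
    fejerMean T g ≤ 2 * D * Y / T := by
  have hcont : Continuous fun x => (1 - x / T) * g x := by fun_prop
  have hweight {x : ℝ} (hx : x ≤ T) : 0 ≤ 1 - x / T := sub_nonneg.2 ((div_le_one hT).2 hx)
  have hhead : ∫ x in 0..Y, (1 - x / T) * g x ≤ Y * D := by
    have hmono := intervalIntegral.integral_mono_on hY (hcont.intervalIntegrable 0 Y)
      (intervalIntegrable_const (μ := volume) (c := D)) fun x hx => by
        calc (1 - x / T) * g x ≤ (1 - x / T) * D :=
              mul_le_mul_of_nonneg_left (hgD x hx) (hweight (hx.2.trans hYT))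
          _ ≤ D := mul_le_of_le_one_left hD (sub_le_self _ (div_nonneg hx.1 hT.le))
    simpa using hmono
  have htail : ∫ x in Y..T, (1 - x / T) * g x ≤ 0 := by
    simpa using intervalIntegral.integral_mono_on hYT (hcont.intervalIntegrable Y T)
      (intervalIntegrable_const (μ := volume) (c := 0)) fun x hx =>
        mul_nonpos_of_nonneg_of_nonpos (hweight hx.2) (hg0 x hx)
  rw [fejerMean, ← intervalIntegral.integral_add_adjacent_intervals
    (hcont.intervalIntegrable 0 Y) (hcont.intervalIntegrable Y T)]
  calc 2 / T * ((∫ x in 0..Y, (1 - x / T) * g x) + ∫ x in Y..T, (1 - x / T) * g x)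
      ≤ 2 / T * (Y * D) := by gcongr; linarith
    _ = 2 * D * Y / T := by ring

end FejerMean

section EvenFunction

variable {h : ℝ → ℝ}

lemma integrable_cos_comp_mul {μ : Measure ℝ} {θ : ℝ → ℝ} (hθ : Continuous θ)
    (hh : Integrable h μ) : Integrable (fun v => cos (θ v) * h v) μ :=
  hh.bdd_mul (by fun_prop) (.of_forall fun _ => abs_cos_le_one _)

lemma integrable_sin_comp_mul {μ : Measure ℝ} {θ : ℝ → ℝ} (hθ : Continuous θ)
    (hh : Integrable h μ) : Integrable (fun v => sin (θ v) * h v) μ :=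
  hh.bdd_mul (by fun_prop) (.of_forall fun _ => abs_sin_le_one _)

lemma integral_sin_mul_eq_zero_of_even (heven : h.Even) (c : ℝ) : ∫ v, sin (c * v) * h v = 0 := by
  have hneg := integral_neg_eq_self (fun v => sin (c * v) * h v) volume
  simp only [mul_neg, sin_neg, neg_mul, heven _, integral_neg] at hneg
  linarith

lemma integral_cos_add_mul_of_even (heven : h.Even) (hh : Integrable h) (α c : ℝ) :
    ∫ v, cos (α + c * v) * h v = cos α * ∫ v, cos (c * v) * h v := by
  have hexpand (v : ℝ) : cos (α + c * v) * h v =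
      cos α * (cos (c * v) * h v) - sin α * (sin (c * v) * h v) := by
    rw [cos_add]
    ring
  simp_rw [hexpand]
  rw [integral_sub ((integrable_cos_comp_mul (by fun_prop) hh).const_mul _)
      ((integrable_sin_comp_mul (by fun_prop) hh).const_mul _),
    integral_const_mul, integral_const_mul, integral_sin_mul_eq_zero_of_even heven, mul_zero,
    sub_zero]

lemma fourier_ofReal_of_even (heven : h.Even) (hh : Integrable h) (u : ℝ) :
    𝓕 (fun x => (h x : ℂ)) u = ((∫ v, cos (2 * π * u * v) * h v : ℝ) : ℂ) := by
  have hexp (v : ℝ) : Complex.exp (↑(-2 * π * v * u) * Complex.I) • (h v : ℂ) =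
      ((cos (2 * π * u * v) * h v : ℝ) : ℂ) -
        ((sin (2 * π * u * v) * h v : ℝ) : ℂ) * Complex.I := by
    rw [show -2 * π * v * u = -(2 * π * u * v) by ring, Complex.exp_mul_I, ← Complex.ofReal_cos,
      ← Complex.ofReal_sin, cos_neg, sin_neg]
    push_cast
    rw [smul_eq_mul]
    ring
  simp_rw [fourier_real_eq_integral_exp_smul, hexp]
  rw [integral_sub (integrable_cos_comp_mul (by fun_prop) hh).ofReal
    ((integrable_sin_comp_mul (by fun_prop) hh).ofReal.mul_const _), integral_mul_const,
    integral_complex_ofReal, integral_complex_ofReal, integral_sin_mul_eq_zero_of_even heven]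
  simp

end EvenFunction

section FejerKernel

@[fun_prop]
lemma continuous_fejerKernel : Continuous fejerKernel := by unfold fejerKernel; fun_prop

lemma fejerKernel_nonneg (u : ℝ) : 0 ≤ fejerKernel u := sq_nonneg _

lemma fejerKernel_le_one (u : ℝ) : fejerKernel u ≤ 1 :=
  (sq_le_one_iff_abs_le_one _).2 (abs_sinc_le_one _)

lemma even_fejerKernel : fejerKernel.Even := fun u => by simp [fejerKernel]

lemma fejerKernel_mul_sq_le (u : ℝ) : fejerKernel u * u ^ 2 ≤ (π ^ 2)⁻¹ := by
  rcases eq_or_ne u 0 with rfl | hu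
  · simp only [ne_eq, OfNat.ofNat_ne_zero, not_false_eq_true, zero_pow, mul_zero]
    positivity
  · have hπ := pi_ne_zero
    calc fejerKernel u * u ^ 2 = sin (π * u) ^ 2 * (π ^ 2)⁻¹ := by
          rw [fejerKernel, sinc_of_ne_zero (by positivity)]
          field_simp
      _ ≤ (π ^ 2)⁻¹ := mul_le_of_le_one_left (by positivity) (sin_sq_le_one _)

lemma integrable_fejerKernel : Integrable fejerKernel := by
  refine (integrable_inv_one_add_sq.const_mul 2).mono' (by fun_prop) (.of_forall fun u => ?_)
  rw [norm_of_nonneg (fejerKernel_nonneg u), ← div_eq_mul_inv, le_div_iff₀ (by positivity)]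
  have hπ : (π ^ 2)⁻¹ ≤ 1 := inv_le_one_of_one_le₀ (by nlinarith [pi_gt_three])
  linarith [fejerKernel_le_one u, fejerKernel_mul_sq_le u]

lemma setIntegral_Ioi_fejerKernel_le {a : ℝ} (ha : 0 < a) :
    ∫ v in Ioi a, fejerKernel v ≤ 1 / (π ^ 2 * a) := by
  calc ∫ v in Ioi a, fejerKernel v ≤ ∫ v in Ioi a, (π ^ 2)⁻¹ * v ^ (-2 : ℝ) := by
        refine setIntegral_mono_on integrable_fejerKernel.integrableOn
          ((integrableOn_Ioi_rpow_of_lt (by norm_num) ha).const_mul _) measurableSet_Ioi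
          fun v hv => ?_
        have hv0 : 0 < v := ha.trans hv
        rw [rpow_neg hv0.le, rpow_two, ← div_eq_mul_inv, le_div_iff₀ (by positivity)]
        exact fejerKernel_mul_sq_le v
    _ = 1 / (π ^ 2 * a) := by
        rw [integral_const_mul, integral_Ioi_rpow_of_lt (by norm_num) ha]
        norm_num [rpow_neg_one]
        ring

lemma setIntegral_lt_abs_fejerKernel_le {a : ℝ} (ha : 0 < a) :
    ∫ v in {v | a < |v|}, fejerKernel v ≤ 2 / (π ^ 2 * a) := by
  have heven : ∀ v, {v | a < |v|}.indicator fejerKernel v = (Ioi a).indicator fejerKernel |v| :=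
    fun v => by rcases abs_choice v with h | h <;> simp [indicator, h, even_fejerKernel v]
  calc ∫ v in {v | a < |v|}, fejerKernel v = 2 * ∫ v in Ioi a, fejerKernel v := by
        rw [← integral_indicator (measurableSet_lt (by fun_prop) (by fun_prop)),
          integral_congr_ae (.of_forall heven), integral_comp_abs,
          setIntegral_indicator measurableSet_Ioi, inter_eq_right.2 (Ioi_subset_Ioi ha.le)]
    _ ≤ 2 * (1 / (π ^ 2 * a)) := by gcongr; exact setIntegral_Ioi_fejerKernel_le ha
    _ = 2 / (π ^ 2 * a) := by ring

@[fun_prop]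
lemma continuous_triangle : Continuous triangle := by unfold triangle; fun_prop

lemma triangle_nonneg (x : ℝ) : 0 ≤ triangle x := le_max_left _ _

lemma triangle_le_one (x : ℝ) : triangle x ≤ 1 :=
  max_le zero_le_one (sub_le_self _ (abs_nonneg x))

lemma triangle_of_one_le_abs {x : ℝ} (h : 1 ≤ |x|) : triangle x = 0 :=
  max_eq_left (by linarith)

lemma hasCompactSupport_triangle : HasCompactSupport triangle :=
  .intro (isCompact_Icc (a := -1) (b := 1)) fun _ hx =>
    triangle_of_one_le_abs (not_lt.1 fun h => hx (abs_le.1 h.le))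

lemma integral_cos_mul_triangle (u : ℝ) :
    ∫ v, cos (2 * π * u * v) * triangle v = fejerKernel u := by
  have heven (v : ℝ) : cos (2 * π * u * v) * triangle v =
      max 0 (1 - |v|) * cos (2 * π * u * |v|) := by
    rcases abs_choice v with h | h <;> simp [h, triangle, mul_comm]
  calc ∫ v, cos (2 * π * u * v) * triangle v
      = 2 * ∫ v in Ioi 0, max 0 (1 - v) * cos (2 * π * u * v) := by
        simp_rw [heven]
        exact integral_comp_abs (f := fun y => max 0 (1 - y) * cos (2 * π * u * y))
    _ = 2 * ∫ v in Ioc 0 1, (1 - v) * cos (2 * π * u * v) := by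
        rw [setIntegral_eq_of_subset_of_forall_sdiff_eq_zero measurableSet_Ioi
          (Ioc_subset_Ioi_self : Ioc (0 : ℝ) 1 ⊆ Ioi 0) fun v hv => ?_]
        · congr 1
          exact setIntegral_congr_fun measurableSet_Ioc fun v hv => by
            simp only [max_eq_right (sub_nonneg.2 hv.2)]
        · rw [max_eq_left (sub_nonpos.2 (not_le.1 fun h => hv.2 ⟨hv.1, h⟩).le), zero_mul]
    _ = fejerKernel u := by
        rw [← mul_one u, ← fejerMean_cos one_ne_zero, fejerMean,
          intervalIntegral.integral_of_le zero_le_one]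
        simp only [mul_one, div_one]

lemma even_triangle : triangle.Even := fun x => by simp [triangle]

lemma integral_cos_mul_fejerKernel (ξ : ℝ) :
    ∫ v, cos (2 * π * ξ * v) * fejerKernel v = triangle ξ := by
  have hint : Integrable triangle :=
    continuous_triangle.integrable_of_hasCompactSupport hasCompactSupport_triangle
  have hfourier : 𝓕 (fun x => (triangle x : ℂ)) = fun u => (fejerKernel u : ℂ) := by
    ext u
    rw [fourier_ofReal_of_even even_triangle hint, integral_cos_mul_triangle]
  have hcont : Continuous fun x => (triangle x : ℂ) := by fun_prop
  have hinv := congrFun (hcont.fourierInv_fourier_eq hint.ofReal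
    (hfourier ▸ integrable_fejerKernel.ofReal)) (-ξ)
  rw [fourierInv_eq_fourier_neg, neg_neg, hfourier,
    fourier_ofReal_of_even even_fejerKernel integrable_fejerKernel, even_triangle] at hinv
  exact_mod_cast hinv

lemma integral_cos_add_mul_fejerKernel (α ξ : ℝ) :
    ∫ v, cos (α + 2 * π * ξ * v) * fejerKernel v = cos α * triangle ξ := by
  rw [integral_cos_add_mul_of_even even_fejerKernel integrable_fejerKernel,
    integral_cos_mul_fejerKernel]

lemma integral_fejerKernel : ∫ v, fejerKernel v = 1 := by
  simpa [triangle] using integral_cos_mul_fejerKernel 0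

end FejerKernel

section CosSeries

/-- The trigonometric series `∑ cₙ cos(θₙ + 2πωₙx)` with frequencies `ωₙ` and phases `θₙ`; the
function `Re (e^{iβ} F)` is the one with constant phase `β`. -/
noncomputable def cosSeries {ι : Type*} (c θ ω : ι → ℝ) (x : ℝ) : ℝ :=
  ∑' n, c n * cos (θ n + 2 * π * ω n * x)

variable {ι : Type*} {c : ι → ℝ}

lemma norm_mul_cos_le (a t : ℝ) : ‖a * cos t‖ ≤ |a| := by
  rw [norm_mul, norm_eq_abs, norm_eq_abs]
  exact mul_le_of_le_one_right (abs_nonneg a) (abs_cos_le_one t)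

lemma hasSum_cosSeries (hc : Summable c) (θ ω : ι → ℝ) (x : ℝ) :
    HasSum (fun n => c n * cos (θ n + 2 * π * ω n * x)) (cosSeries c θ ω x) :=
  (Summable.of_norm_bounded hc.abs fun _ => norm_mul_cos_le _ _).hasSum

lemma abs_cosSeries_le (hc : Summable c) (θ ω : ι → ℝ) (x : ℝ) :
    |cosSeries c θ ω x| ≤ ∑' n, |c n| :=
  tsum_of_norm_bounded hc.abs.hasSum fun _ => norm_mul_cos_le _ _

lemma continuous_cosSeries (hc : Summable c) (θ ω : ι → ℝ) : Continuous (cosSeries c θ ω) :=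
  continuous_tsum (fun _ => by fun_prop) hc.abs fun _ _ => norm_mul_cos_le _ _

lemma re_exp_mul_tsum_exp (hc : Summable c) (ω : ι → ℝ) (β x : ℝ) :
    (Complex.exp (Complex.I * β) *
      ∑' n, (c n : ℂ) * Complex.exp (2 * π * Complex.I * ω n * x)).re =
      cosSeries c (fun _ => β) ω x := by
  have hterm (n : ι) : Complex.exp (Complex.I * β) *
      ((c n : ℂ) * Complex.exp (2 * π * Complex.I * ω n * x)) =
      (c n : ℂ) * Complex.exp (((β + 2 * π * ω n * x : ℝ) : ℂ) * Complex.I) := by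
    rw [mul_left_comm, ← Complex.exp_add]
    congr 2
    push_cast
    ring
  have hsummable : Summable fun n =>
      (c n : ℂ) * Complex.exp (((β + 2 * π * ω n * x : ℝ) : ℂ) * Complex.I) :=
    .of_norm_bounded hc.abs fun n => by
      rw [norm_mul, Complex.norm_exp_ofReal_mul_I, mul_one, Complex.norm_real, norm_eq_abs]
  simp_rw [← tsum_mul_left, hterm]
  rw [Complex.re_tsum hsummable, cosSeries]
  exact tsum_congr fun n => by rw [Complex.re_ofReal_mul, Complex.exp_ofReal_mul_I_re]

lemma hasSum_integral_cosSeries_mul [Countable ι] {μ : Measure ℝ} {h : ℝ → ℝ}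
    (hc : Summable c) (θ ω : ι → ℝ) (hh : Integrable h μ) :
    HasSum (fun n => c n * ∫ v, cos (θ n + 2 * π * ω n * v) * h v ∂μ)
      (∫ v, cosSeries c θ ω v * h v ∂μ) := by
  simp_rw [← integral_const_mul]
  refine hasSum_integral_of_dominated_convergence (fun n v => |c n| * ‖h v‖)
    (fun n => ((integrable_cos_comp_mul (by fun_prop) hh).const_mul _).aestronglyMeasurable)
    (fun n => .of_forall fun v => ?_) (.of_forall fun v => hc.abs.mul_right _)
    (by simpa only [tsum_mul_right] using hh.norm.const_mul _)
    (.of_forall fun v => ?_)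
  · rw [← mul_assoc, norm_mul]
    gcongr
    exact norm_mul_cos_le _ _
  · simpa only [mul_assoc] using (hasSum_cosSeries hc θ ω v).mul_right (h v)

lemma hasSum_fejerMean_cosSeries_mul [Countable ι] {T : ℝ} {h : ℝ → ℝ} (hT : 0 ≤ T)
    (hc : Summable c) (θ ω : ι → ℝ) (hh : Continuous h) :
    HasSum (fun n => c n * fejerMean T fun x => cos (θ n + 2 * π * ω n * x) * h x)
      (fejerMean T fun x => cosSeries c θ ω x * h x) := by
  have hint : IntegrableOn (fun x => (1 - x / T) * h x) (Ioc 0 T) :=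
    (Continuous.integrableOn_Icc (by fun_prop)).mono_set Ioc_subset_Icc_self
  have hsum := (hasSum_integral_cosSeries_mul hc θ ω hint).mul_left (2 / T)
  simp only [fejerMean, intervalIntegral.integral_of_le hT]
  simpa only [mul_left_comm] using hsum

end CosSeries

section RieszProduct

/-- The Riesz product `∏ (1 + cos(2πωₘx))` over `m ∈ s`, the nonnegative weight that resonates
with each of the frequencies `ωₘ`. -/
noncomputable def rieszProduct {ι : Type*} (s : Finset ι) (ω : ι → ℝ) (x : ℝ) : ℝ :=
  ∏ m ∈ s, (1 + cos (2 * π * ω m * x))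

variable {ι : Type*} {T : ℝ} (s : Finset ι) (ω : ι → ℝ)

@[fun_prop]
lemma continuous_rieszProduct : Continuous (rieszProduct s ω) := by
  unfold rieszProduct
  fun_prop

lemma rieszProduct_nonneg (x : ℝ) : 0 ≤ rieszProduct s ω x :=
  Finset.prod_nonneg fun m _ => by linarith [neg_one_le_cos (2 * π * ω m * x)]

lemma rieszProduct_le_two_pow_card (x : ℝ) : rieszProduct s ω x ≤ 2 ^ s.card := by
  rw [← Finset.prod_const]
  exact Finset.prod_le_prod (fun m _ => by linarith [neg_one_le_cos (2 * π * ω m * x)])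
    fun m _ => by linarith [cos_le_one (2 * π * ω m * x)]

lemma rieszProduct_cons {m : ι} (hm : m ∉ s) (x : ℝ) :
    rieszProduct (s.cons m hm) ω x = (1 + cos (2 * π * ω m * x)) * rieszProduct s ω x :=
  Finset.prod_cons hm

lemma fejerMean_cos_mul_rieszProduct_nonneg (hT : T ≠ 0) (ξ : ℝ) :
    0 ≤ fejerMean T fun x => cos (2 * π * ξ * x) * rieszProduct s ω x := by
  induction s using Finset.cons_induction generalizing ξ with
  | empty => simpa [rieszProduct, fejerMean_cos hT] using fejerKernel_nonneg (ξ * T)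
  | cons m s hm ih =>
    have hsplit (x : ℝ) : cos (2 * π * ξ * x) * rieszProduct (s.cons m hm) ω x =
        cos (2 * π * ξ * x) * rieszProduct s ω x +
          1 / 2 * (cos (2 * π * (ξ + ω m) * x) * rieszProduct s ω x +
            cos (2 * π * (ξ - ω m) * x) * rieszProduct s ω x) := by
      rw [rieszProduct_cons, mul_add _ ξ, mul_sub _ ξ, add_mul (2 * π * ξ), sub_mul (2 * π * ξ),
        cos_add, cos_sub]
      ring
    simp_rw [hsplit]
    rw [fejerMean_add (by fun_prop) (by fun_prop), fejerMean_const_mul,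
      fejerMean_add (by fun_prop) (by fun_prop)]
    linarith [ih ξ, ih (ξ + ω m), ih (ξ - ω m)]

lemma one_le_fejerMean_rieszProduct (hT : T ≠ 0) : 1 ≤ fejerMean T (rieszProduct s ω) := by
  induction s using Finset.cons_induction with
  | empty => exact (fejerMean_one hT).ge
  | cons m s hm ih =>
    have hsplit : rieszProduct (s.cons m hm) ω =
        fun x => rieszProduct s ω x + cos (2 * π * ω m * x) * rieszProduct s ω x := by
      ext x
      rw [rieszProduct_cons]
      ring
    rw [hsplit, fejerMean_add (by fun_prop) (by fun_prop)]
    linarith [fejerMean_cos_mul_rieszProduct_nonneg s ω hT (ω m)]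

lemma half_fejerMean_rieszProduct_le (hT : T ≠ 0) {m : ι} (hm : m ∈ s) :
    fejerMean T (rieszProduct s ω) / 2 ≤
      fejerMean T fun x => cos (2 * π * ω m * x) * rieszProduct s ω x := by
  classical
  have hsplit (x : ℝ) : cos (2 * π * ω m * x) * rieszProduct s ω x =
      1 / 2 * (rieszProduct s ω x +
        (cos (2 * π * ω m * x) * rieszProduct (s.erase m) ω x +
          cos (2 * π * (2 * ω m) * x) * rieszProduct (s.erase m) ω x)) := by
    have herase : rieszProduct s ω x =
        (1 + cos (2 * π * ω m * x)) * rieszProduct (s.erase m) ω x :=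
      (Finset.mul_prod_erase s _ hm).symm
    rw [herase, show 2 * π * (2 * ω m) * x = 2 * (2 * π * ω m * x) by ring, cos_two_mul]
    ring
  simp_rw [hsplit]
  rw [fejerMean_const_mul, fejerMean_add (by fun_prop) (by fun_prop),
    fejerMean_add (by fun_prop) (by fun_prop)]
  linarith [fejerMean_cos_mul_rieszProduct_nonneg (s.erase m) ω hT (ω m),
    fejerMean_cos_mul_rieszProduct_nonneg (s.erase m) ω hT (2 * ω m)]

variable [Countable ι] {c : ι → ℝ}

lemma half_sum_mul_fejerMean_rieszProduct_le (hc : Summable c) (hc0 : ∀ n, 0 ≤ c n) (hT : 0 < T) :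
    (∑ m ∈ s, c m) / 2 * fejerMean T (rieszProduct s ω) ≤
      fejerMean T fun x => cosSeries c 0 ω x * rieszProduct s ω x := by
  have hsum := hasSum_fejerMean_cosSeries_mul hT.le hc 0 ω (continuous_rieszProduct s ω)
  simp only [Pi.zero_apply, zero_add] at hsum
  calc (∑ m ∈ s, c m) / 2 * fejerMean T (rieszProduct s ω)
      = ∑ m ∈ s, c m * (fejerMean T (rieszProduct s ω) / 2) := by
        rw [← Finset.sum_mul]
        ring
    _ ≤ ∑ m ∈ s, c m * fejerMean T fun x => cos (2 * π * ω m * x) * rieszProduct s ω x :=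
        Finset.sum_le_sum fun m hm =>
          mul_le_mul_of_nonneg_left (half_fejerMean_rieszProduct_le s ω hT.ne' hm) (hc0 m)
    _ ≤ _ := sum_le_hasSum s (fun n _ =>
        mul_nonneg (hc0 n) (fejerMean_cos_mul_rieszProduct_nonneg s ω hT.ne' (ω n))) hsum

lemma half_sum_le_of_cosSeries_le (hc : Summable c) (hc0 : ∀ n, 0 ≤ c n) {B Y : ℝ} (hB : 0 ≤ B)
    (hY : 0 ≤ Y) (hT : 0 < T) (hYT : Y ≤ T) (hcB : ∀ x ∈ Icc Y T, cosSeries c 0 ω x ≤ B) :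
    (∑ m ∈ s, c m) / 2 ≤ B + 2 * ((∑' n, c n) * 2 ^ s.card) * Y / T := by
  have hA0 : 0 ≤ ∑' n, c n := tsum_nonneg hc0
  have hcA (x : ℝ) : cosSeries c 0 ω x ≤ ∑' n, c n := by
    simpa only [abs_of_nonneg (hc0 _)] using (le_abs_self _).trans (abs_cosSeries_le hc 0 ω x)
  have hcont := continuous_cosSeries hc 0 ω
  have hdiff : fejerMean T (fun x => (cosSeries c 0 ω x - B) * rieszProduct s ω x) =
      fejerMean T (fun x => cosSeries c 0 ω x * rieszProduct s ω x) -
        B * fejerMean T (rieszProduct s ω) := by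
    simp_rw [sub_eq_add_neg, add_mul]
    rw [fejerMean_add (by fun_prop) (by fun_prop), fejerMean_const_mul, neg_mul]
  have hupper := fejerMean_le_of_nonpos_on
    (g := fun x => (cosSeries c 0 ω x - B) * rieszProduct s ω x)
    (D := (∑' n, c n) * 2 ^ s.card) (by fun_prop) hY hYT hT (by positivity)
    (fun x _ => mul_le_mul ((sub_le_self _ hB).trans (hcA x)) (rieszProduct_le_two_pow_card s ω x)
      (rieszProduct_nonneg s ω x) hA0)
    (fun x hx => mul_nonpos_of_nonpos_of_nonneg (sub_nonpos.2 (hcB x hx))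
      (rieszProduct_nonneg s ω x))
  have hlower := half_sum_mul_fejerMean_rieszProduct_le s ω hc hc0 hT
  have herr : 0 ≤ 2 * ((∑' n, c n) * 2 ^ s.card) * Y / T := by positivity
  rcases le_total ((∑ m ∈ s, c m) / 2) B with hle | hge
  · exact le_add_of_le_of_nonneg hle herr
  · have hmean := le_mul_of_one_le_right (sub_nonneg.2 hge)
      (one_le_fejerMean_rieszProduct s ω hT.ne')
    linarith

end RieszProduct

section BandLimiting

lemma integral_cos_mul_cos_mul_fejerKernel (α β : ℝ) {ξ : ℝ} (hξ : 0 ≤ ξ) :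
    ∫ v, cos (α + 2 * π * ξ * v) * (cos (β + 2 * π * v) * fejerKernel v) =
      cos (α - β) * triangle (ξ - 1) / 2 := by
  have hproduct (v : ℝ) : cos (α + 2 * π * ξ * v) * (cos (β + 2 * π * v) * fejerKernel v) =
      1 / 2 * (cos (α - β + 2 * π * (ξ - 1) * v) * fejerKernel v +
        cos (α + β + 2 * π * (ξ + 1) * v) * fejerKernel v) := by
    rw [show α - β + 2 * π * (ξ - 1) * v = α + 2 * π * ξ * v - (β + 2 * π * v) by ring,
      show α + β + 2 * π * (ξ + 1) * v = α + 2 * π * ξ * v + (β + 2 * π * v) by ring,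
      cos_sub (α + 2 * π * ξ * v), cos_add (α + 2 * π * ξ * v)]
    ring
  have hvanish : triangle (ξ + 1) = 0 :=
    triangle_of_one_le_abs ((le_add_of_nonneg_left hξ).trans (le_abs_self _))
  simp_rw [hproduct]
  rw [integral_const_mul,
    integral_add (integrable_cos_comp_mul (by fun_prop) integrable_fejerKernel)
      (integrable_cos_comp_mul (by fun_prop) integrable_fejerKernel),
    integral_cos_add_mul_fejerKernel, integral_cos_add_mul_fejerKernel, hvanish]
  ring

lemma abs_integral_mul_fejerKernel_le {h : ℝ → ℝ} {a S A : ℝ} (ha : 0 < a) (hS : 0 ≤ S)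
    (hhS : ∀ v, |v| ≤ a → |h v| ≤ S) (hhA : ∀ v, |h v| ≤ A) :
    |∫ v, h v * fejerKernel v| ≤ S + 2 * A / (π ^ 2 * a) := by
  have hA : 0 ≤ A := (abs_nonneg _).trans (hhA 0)
  have hmeas : MeasurableSet {v : ℝ | a < |v|} := measurableSet_lt (by fun_prop) (by fun_prop)
  have hbound (v : ℝ) : ‖h v * fejerKernel v‖ ≤
      S * fejerKernel v + A * {v | a < |v|}.indicator fejerKernel v := by
    have hK := fejerKernel_nonneg v
    rw [norm_mul, norm_of_nonneg hK, norm_eq_abs]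
    rcases le_or_gt |v| a with hv | hv
    · rw [indicator_of_notMem (show v ∉ {v | a < |v|} from not_lt.2 hv), mul_zero, add_zero]
      exact mul_le_mul_of_nonneg_right (hhS v hv) hK
    · rw [indicator_of_mem (show v ∈ {v | a < |v|} from hv)]
      exact (mul_le_mul_of_nonneg_right (hhA v) hK).trans (le_add_of_nonneg_left (by positivity))
  have hint := integrable_fejerKernel.indicator hmeas
  calc |∫ v, h v * fejerKernel v|
      ≤ ∫ v, (S * fejerKernel v + A * {v | a < |v|}.indicator fejerKernel v) :=
        norm_integral_le_of_norm_le ((integrable_fejerKernel.const_mul S).add (hint.const_mul A))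
          (.of_forall hbound)
    _ = S + A * ∫ v in {v | a < |v|}, fejerKernel v := by
        rw [integral_add (integrable_fejerKernel.const_mul S) (hint.const_mul A),
          integral_const_mul, integral_const_mul, integral_indicator hmeas, integral_fejerKernel,
          mul_one]
    _ ≤ S + A * (2 / (π ^ 2 * a)) := by gcongr; exact setIntegral_lt_abs_fejerKernel_le ha
    _ = S + 2 * A / (π ^ 2 * a) := by ring

variable {ι : Type*} [Countable ι] {c ω : ι → ℝ}

lemma tsum_triangle_mul_cos_eq_integral (hc : Summable c) (θ : ι → ℝ) (hω : ∀ n, 0 ≤ ω n)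
    (β : ℝ) :
    ∑' n, c n * triangle (ω n - 1) * cos (θ n - β) =
      2 * ∫ v, cosSeries c θ ω v * cos (β + 2 * π * v) * fejerKernel v := by
  simp_rw [mul_assoc (cosSeries _ _ _ _)]
  rw [← (hasSum_integral_cosSeries_mul hc θ ω
    (integrable_cos_comp_mul (by fun_prop) integrable_fejerKernel)).tsum_eq, ← tsum_mul_left]
  refine tsum_congr fun n => ?_
  rw [integral_cos_mul_cos_mul_fejerKernel _ _ (hω n)]
  ring

lemma cosSeries_mul_triangle_le (hc : Summable c) (hω : ∀ n, 0 ≤ ω n) {L Y S x : ℝ} (hL : 0 < L)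
    (hY : 0 < Y) (β : ℝ) (hS : ∀ u, |u| ≤ Y / 2 → |cosSeries c (fun _ => β) ω (x + u)| ≤ S) :
    cosSeries (fun n => c n * triangle (ω n / L - 1)) 0 ω x ≤
      2 * (S + 4 * (∑' n, |c n|) / (π ^ 2 * Y * L)) := by
  have hS0 : 0 ≤ S := (abs_nonneg _).trans (hS 0 (by rw [abs_zero]; positivity))
  have hrescale (v : ℝ) : cosSeries c (fun n => β + 2 * π * ω n * x) (fun n => ω n / L) v =
      cosSeries c (fun _ => β) ω (x + v / L) :=
    tsum_congr fun n => by congr 2; ring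
  have hcos {y B : ℝ} (v : ℝ) (hy : |y| ≤ B) : |y * cos (β + 2 * π * v)| ≤ B :=
    (norm_mul_cos_le _ _).trans hy
  have hbound := abs_integral_mul_fejerKernel_le (a := L * Y / 2)
    (h := fun v => cosSeries c (fun _ => β) ω (x + v / L) * cos (β + 2 * π * v))
    (by positivity) hS0
    (fun v hv => hcos v (hS (v / L) (by
      rw [abs_div, abs_of_pos hL, div_le_iff₀ hL]
      linarith)))
    (fun v => hcos v (abs_cosSeries_le hc _ ω (x + v / L)))
  calc cosSeries (fun n => c n * triangle (ω n / L - 1)) 0 ω x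
      = ∑' n, c n * triangle (ω n / L - 1) * cos (β + 2 * π * ω n * x - β) :=
        tsum_congr fun n => by simp
    _ = 2 * ∫ v, cosSeries c (fun _ => β) ω (x + v / L) * cos (β + 2 * π * v) * fejerKernel v := by
        rw [tsum_triangle_mul_cos_eq_integral hc _ fun n => div_nonneg (hω n) hL.le]
        simp_rw [hrescale]
    _ ≤ 2 * (S + 2 * (∑' n, |c n|) / (π ^ 2 * (L * Y / 2))) := by
        gcongr
        exact (le_abs_self _).trans hbound
    _ = 2 * (S + 4 * (∑' n, |c n|) / (π ^ 2 * Y * L)) := by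
        field_simp
        ring

end BandLimiting

section Resonance

lemma half_le_triangle {t L : ℝ} (hL : 0 < L) (h : 2 * |t - L| ≤ L) :
    1 / 2 ≤ triangle (t / L - 1) := by
  have hdist : |t / L - 1| ≤ 1 / 2 := by
    rw [div_sub_one hL.ne', abs_div, abs_of_pos hL, div_le_iff₀ hL]
    linarith
  exact le_max_of_le_right (by linarith)

lemma triangle_le_ite {t L : ℝ} (hL : 0 < L) :
    triangle (t / L - 1) ≤ if t ≤ 2 * L then 1 else 0 := by
  split_ifs with h
  · exact triangle_le_one _
  · have hfar : 2 ≤ t / L := (le_div_iff₀ hL).2 (not_le.1 h).le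
    exact (triangle_of_one_le_abs (le_abs.2 (.inl (by linarith)))).le

lemma one_le_four_mul_add_log {M : ℕ} {X : ℝ} (hM : 1 ≤ M) (hX : 0 < X) (hMX : 1 ≤ 2 ^ M * X) :
    1 ≤ 4 * (M + log X) := by
  have hlog : 0 ≤ M * log 2 + log X := by
    rw [← log_pow, ← log_mul (by positivity) hX.ne']
    exact log_nonneg hMX
  have hM' : (1 : ℝ) ≤ M := by exact_mod_cast hM
  nlinarith [log_two_lt_d9]

lemma eighth_sum_le_of_abs_cosSeries_le {ι : Type*} [Countable ι] {c ω : ι → ℝ}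
    (hc : Summable c) (hc0 : ∀ n, 0 ≤ c n) (hω : ∀ n, 0 ≤ ω n) {s : Finset ι} {L Y T S β : ℝ}
    (hL : 0 < L) (hs : ∀ m ∈ s, 2 * |ω m - L| ≤ L) (hY : 0 < Y) (hYT : Y ≤ T)
    (hS : ∀ x ∈ Icc (Y / 2) (2 * T), |cosSeries c (fun _ => β) ω x| ≤ S) :
    (∑ m ∈ s, c m) / 8 ≤ S + 4 * (∑' n, c n) / (π ^ 2 * Y * L) +
      2 ^ s.card * Y / T * ∑' n, if ω n ≤ 2 * L then c n else 0 := by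
  set E := 4 * (∑' n, c n) / (π ^ 2 * Y * L)
  set W := ∑' n, if ω n ≤ 2 * L then c n else 0
  set d : ι → ℝ := fun n => c n * triangle (ω n / L - 1)
  have hT : 0 < T := hY.trans_le hYT
  have hd0 (n : ι) : 0 ≤ d n := mul_nonneg (hc0 n) (triangle_nonneg _)
  have hd : Summable d :=
    .of_nonneg_of_le hd0 (fun n => mul_le_of_le_one_right (hc0 n) (triangle_le_one _)) hc
  have hB : 0 ≤ 2 * (S + E) := by
    have hS0 : 0 ≤ S := (abs_nonneg _).trans (hS Y ⟨by linarith, by linarith⟩)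
    have hA0 : 0 ≤ ∑' n, c n := tsum_nonneg hc0
    positivity
  have hsmooth : ∀ x ∈ Icc Y T, cosSeries d 0 ω x ≤ 2 * (S + E) := fun x hx => by
    simpa only [abs_of_nonneg (hc0 _)] using cosSeries_mul_triangle_le hc hω hL hY β fun u hu =>
      hS (x + u) ⟨by linarith [hx.1, (abs_le.1 hu).1], by linarith [hx.2, (abs_le.1 hu).2]⟩
  have hsum : (∑ m ∈ s, c m) / 2 ≤ ∑ m ∈ s, d m := by
    rw [Finset.sum_div]
    exact Finset.sum_le_sum fun m hm => by
      linarith [mul_le_mul_of_nonneg_left (half_le_triangle hL (hs m hm)) (hc0 m)]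
  have hdW : ∑' n, d n ≤ W := hd.tsum_le_tsum
    (fun n => by simpa using mul_le_mul_of_nonneg_left (triangle_le_ite (t := ω n) hL) (hc0 n))
    (hc.indicator {n | ω n ≤ 2 * L})
  have hresonance := half_sum_le_of_cosSeries_le s ω hd hd0 hB hY.le hT hYT hsmooth
  have herr : 2 * ((∑' n, d n) * 2 ^ s.card) * Y / T ≤ 2 * (2 ^ s.card * Y / T * W) := by
    calc 2 * ((∑' n, d n) * 2 ^ s.card) * Y / T ≤ 2 * (W * 2 ^ s.card) * Y / T := by gcongr
      _ = 2 * (2 ^ s.card * Y / T * W) := by ring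
  linarith

theorem resonance_theorem_one_general {ι : Type*} [Countable ι] {lam f : ι → ℝ}
    (hlam : ∀ n, 0 ≤ lam n) (hf : ∀ n, 0 ≤ f n) (hfs : Summable f) {F : ℝ → ℂ}
    (hF : ∀ x : ℝ, F x = ∑' n, (f n : ℂ) * Complex.exp (2 * π * Complex.I * lam n * x))
    {s : Finset ι} {L : ℝ} (hL : 0 < L) (hs : ∀ m ∈ s, 2 * |lam m - L| ≤ L) (β : ℝ) {X Y : ℝ}
    (hY : 0 < Y) (hYX : Y ≤ 2 ^ s.card * X) :
    (∑ m ∈ s, f m) / 8 - 4 * (F 0).re / (π ^ 2 * Y * L) -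
        Y / X * ∑' n, (if lam n ≤ 2 * L then f n else 0) ≤
      sSup ((fun x => |(Complex.exp (Complex.I * β) * F x).re|) ''
        Icc (Y / 2) (2 ^ (s.card + 1) * X)) := by
  have hF0 : (F 0).re = ∑' n, f n := by
    simpa [hF, cosSeries] using re_exp_mul_tsum_exp hfs lam 0 0
  simp_rw [hF0, hF, re_exp_mul_tsum_exp hfs]
  have hbound := eighth_sum_le_of_abs_cosSeries_le hfs hf hlam hL hs hY hYX fun x hx =>
    le_csSup ⟨_, forall_mem_image.2 fun y _ => abs_cosSeries_le hfs (fun _ => β) lam y⟩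
      (mem_image_of_mem (fun y => |cosSeries f (fun _ => β) lam y|) hx)
  rw [mul_div_mul_left _ _ (by positivity), ← mul_assoc, ← pow_succ'] at hbound
  linarith

end Resonance

theorem resonance_theorem_one :
    ∃ C : ℝ, 0 < C ∧
      ∀ (lam : ℕ → ℝ), (∀ n, 0 ≤ lam n) → StrictMono lam →
      ∀ (f : ℕ → ℝ), (∀ n, 0 ≤ f n) → Summable f →
      ∀ (F : ℝ → ℂ),
        (∀ x : ℝ, F x = ∑' n : ℕ, (f n : ℂ) * Complex.exp (2 * π * Complex.I * lam n * x)) →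
      ∀ (M N : ℕ), 1 ≤ M → 1 ≤ N →
      ∀ (𝓜 : Finset ℕ), 𝓜.card = M → (∀ m ∈ 𝓜, 2 * |lam m - lam N| ≤ lam N) →
      ∀ (β : ℝ) (X Y : ℝ), 1 ≤ Y → Y < 2 ^ M * X →
        sSup ((fun x => |(Complex.exp (Complex.I * β) * F x).re|) ''
            Set.Icc (Y / 2) (2 ^ (M + 1) * X)) ≥
          (1 / 16) * ∑ m ∈ 𝓜, f m - 4 * (F 0).re / (π ^ 2 * Y * lam N) -
            C * (Y * ((M : ℝ) + Real.log X) / X) *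
              ∑' n : ℕ, (if lam n ≤ 2 * lam N then f n else 0) := by
  refine ⟨4, by norm_num, fun lam hlam hmono f hf hfs F hF M N hM hN 𝓜 hcard h𝓜 β X Y hY hYX => ?_⟩
  subst hcard
  have hY0 : 0 < Y := one_pos.trans_le hY
  have hX : 0 < X := pos_of_mul_pos_right (hY0.trans hYX) (by positivity)
  have hresonance := resonance_theorem_one_general hlam hf hfs hF
    ((hlam 0).trans_lt (hmono hN)) h𝓜 β hY0 hYX.le
  have hsum : 0 ≤ ∑ m ∈ 𝓜, f m := Finset.sum_nonneg fun m _ => hf m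
  have hW : 0 ≤ ∑' n, if lam n ≤ 2 * lam N then f n else 0 :=
    tsum_nonneg fun n => ite_nonneg (hf n) le_rfl
  have hconst : Y / X ≤ 4 * (Y * ((𝓜.card : ℝ) + log X) / X) := by
    calc Y / X ≤ 4 * (𝓜.card + log X) * (Y / X) :=
          le_mul_of_one_le_left (by positivity) (one_le_four_mul_add_log hM hX (hY.trans hYX.le))
      _ = 4 * (Y * (𝓜.card + log X) / X) := by ring
  linarith [mul_le_mul_of_nonneg_right hconst hW]
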